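/- Let X be a complex Banach space, T a bounded linear operator on X, and Q a quasi-nilpotent bounded operator commuting with T. Then σ_{g_zd}(T) = σ_{g_zd}(T + Q); that is, for every λ ∈ ℂ, T − λI is g_z-invertible if and only if T + Q − λI is g_z-invertible. -/

import Mathlib

open Filter Set Function

variable {X : Type*} [NormedAddCommGroup X] [NormedSpace ℂ X] [CompleteSpace X]

/-- Accumulation points of a subset of `ℂ`. -/
def accSet (A : Set ℂ) : Set ℂ := {z : ℂ | AccPt z (Filter.principal A)}

/-- `(M, N) ∈ Red(T)`: a pair of closed `T`-invariant subspaces with `X = M ⊕ N`. -/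
def Red (T : X →L[ℂ] X) (M N : Submodule ℂ X) : Prop :=
  IsClosed (M : Set X) ∧ IsClosed (N : Set X) ∧ (∀ x ∈ M, T x ∈ M) ∧ (∀ x ∈ N, T x ∈ N) ∧
    IsCompl M N

open Classical in
/-- Restriction of `T` to a `T`-invariant subspace `M` (junk value `0` if `M` is not invariant). -/
noncomputable def restrictCLM (T : X →L[ℂ] X) (M : Submodule ℂ X) : M →L[ℂ] M :=
  if h : ∀ x ∈ M, T x ∈ M then
    { toLinearMap := (T : X →ₗ[ℂ] X).restrict h
      cont := by exact (T.continuous.comp continuous_subtype_val).subtype_mk _ }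
  else 0

/-- An operator is zeroloid if the accumulation points of its spectrum are contained in `{0}`. -/
def Zeroloid {Y : Type*} [NormedAddCommGroup Y] [NormedSpace ℂ Y] (S : Y →L[ℂ] Y) : Prop :=
  accSet (spectrum ℂ S) ⊆ {0}

/-- `T` is `g_z`-invertible: it is the direct sum of an invertible operator and a zeroloid one. -/
def GzInvertible (T : X →L[ℂ] X) : Prop :=
  ∃ M N : Submodule ℂ X, Red T M N ∧ Function.Bijective (restrictCLM T M) ∧
    Zeroloid (restrictCLM T N)

/-- An operator is quasi-nilpotent if its spectrum is contained in `{0}`. -/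
def QuasiNilpotent {Y : Type*} [NormedAddCommGroup Y] [NormedSpace ℂ Y]
    (S : Y →L[ℂ] Y) : Prop :=
  spectrum ℂ S ⊆ {0}

/-!
The operator `T` is `g_z`-invertible if and only if `0` is not an accumulation point of
`acc σ(T)`, so it suffices that `σ(T + Q) = σ(T)`.

* If `T = T_M ⊕ T_N` with `T_M` invertible and `T_N` zeroloid, then `acc σ(T) ⊆ σ(T_M) ∪ {0}`, and
  `σ(T_M)` is a closed set avoiding `0`.
* Conversely, away from `acc σ(T)` the spectrum is locally finite, so some small circle `|z| = r`
  misses `σ(T)` and encloses no accumulation point except possibly `0`. The Riesz projection `P` of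
  this circle commutes with `T`; on `ker P` the operator `T` is invertible, and on `range P` its
  spectrum lies in `σ(T) ∩ {|z| ≤ r}` because `‖Tᵏ P‖ = O(rᵏ)`.
* The spectral radius is submultiplicative on commuting elements, hence `1 + a⁻¹q` is invertible
  whenever `a` is invertible and commutes with the quasi-nilpotent `q`.
-/

open Metric
open scoped Topology

section Topology

theorem finite_inter_of_disjoint_derivedSet {Y : Type*} [TopologicalSpace Y] {S K : Set Y}
    (hK : IsCompact K) (h : Disjoint K (derivedSet S)) : (S ∩ K).Finite := by
  by_contra hinf
  obtain ⟨x, hxK, hx⟩ := Set.Infinite.exists_accPt_of_subset_isCompact hinf hK inter_subset_right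
  exact h.le_bot ⟨hxK, hx.mono (principal_mono.2 inter_subset_left)⟩

theorem exists_ball_inter_subset_singleton {Y : Type*} [PseudoMetricSpace Y] {S : Set Y} {x : Y}
    (hx : x ∉ derivedSet S) : ∃ ε > 0, ball x ε ∩ S ⊆ {x} := by
  have hev : ∀ᶠ y in 𝓝 x, y ∈ S → y = x := by
    filter_upwards [not_frequently.1 (accPt_iff_frequently.not.1 hx)] with y hy hyS
    exact not_not.1 fun hne => hy ⟨hne, hyS⟩
  obtain ⟨ε, hε, hball⟩ := eventually_nhds_iff_ball.1 hev
  exact ⟨ε, hε, fun y hy => hball y hy.1 hy.2⟩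

theorem exists_sphere_disjoint {Y : Type*} [PseudoMetricSpace Y] [ProperSpace Y] {S : Set Y} {x : Y}
    (hx : x ∉ derivedSet (derivedSet S)) :
    ∃ r > 0, Disjoint (sphere x r) S ∧ closedBall x r ∩ derivedSet S ⊆ {x} := by
  obtain ⟨ε, hε, hball⟩ := exists_ball_inter_subset_singleton hx
  set K : Set Y := closedBall x (ε / 2) \ ball x (ε / 3)
  have hK_disjoint : Disjoint K (derivedSet S) := by
    refine Set.disjoint_left.2 fun y ⟨hy_le, hy_ge⟩ hyS => hy_ge ?_
    have hyx : y = x := hball ⟨closedBall_subset_ball (by linarith) hy_le, hyS⟩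
    exact hyx ▸ mem_ball_self (by linarith)
  have hfin : (S ∩ K).Finite :=
    finite_inter_of_disjoint_derivedSet ((isCompact_closedBall x _).diff isOpen_ball) hK_disjoint
  obtain ⟨r, ⟨hr_gt, hr_lt⟩, hr⟩ :=
    ((Ioo_infinite (by linarith : ε / 3 < ε / 2)).sdiff (hfin.image (dist · x))).nonempty
  refine ⟨r, by linarith, Set.disjoint_left.2 fun y hyr hyS => ?_, ?_⟩
  · exact hr ⟨y, ⟨hyS, hyr.trans_le hr_lt.le, (hr_gt.trans_eq hyr.symm).not_gt⟩, hyr⟩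
  · exact (inter_subset_inter_left _ (closedBall_subset_ball (by linarith))).trans hball

end Topology

section Resolvent

variable {R A : Type*} [CommRing R] [Ring A] [Algebra R A] {a c : A} {z : R}

theorem commute_resolvent (h : Commute c a) (z : R) : Commute c (resolvent a z) := by
  have hsub : Commute c (algebraMap R A z - a) := (Algebra.commute_algebraMap_right z c).sub_right h
  by_cases hz : z ∈ resolventSet R a
  · rw [spectrum.resolvent_eq hz]
    exact Commute.units_inv_right (u := IsUnit.unit hz) hsub
  · rw [spectrum.resolvent_zero_of_mem_spectrum hz]
    exact Commute.zero_right c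

theorem mul_resolvent (hz : z ∈ resolventSet R a) :
    a * resolvent a z = z • resolvent a z - 1 := by
  rw [← Ring.mul_inverse_cancel _ hz, sub_mul, Algebra.smul_def, resolvent, sub_sub_cancel]

end Resolvent

section SpectralRadius

theorem spectralRadius_eq_zero_iff {𝕜 A : Type*} [NormedField 𝕜] [Ring A] [Algebra 𝕜 A] {a : A} :
    spectralRadius 𝕜 a = 0 ↔ spectrum 𝕜 a ⊆ {0} := by
  simp [spectralRadius, Set.subset_def]

variable {A : Type*} [NormedRing A] [NormedAlgebra ℂ A] [CompleteSpace A] {a b q : A}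

theorem spectralRadius_ne_top (a : A) : spectralRadius ℂ a ≠ ⊤ := by
  refine ne_top_of_le_ne_top ?_ (spectrum.spectralRadius_le_pow_nnnorm_pow_one_div ℂ a 0)
  simp [ENNReal.mul_eq_top]

theorem spectralRadius_mul_le (h : Commute a b) :
    spectralRadius ℂ (a * b) ≤ spectralRadius ℂ a * spectralRadius ℂ b := by
  have gelfand := fun x : A => spectrum.pow_nnnorm_pow_one_div_tendsto_nhds_spectralRadius x
  refine le_of_tendsto_of_tendsto' (gelfand (a * b)) (ENNReal.Tendsto.mul (gelfand a)
    (Or.inr (spectralRadius_ne_top b)) (gelfand b) (Or.inr (spectralRadius_ne_top a))) fun n => ?_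
  rw [h.mul_pow, ← ENNReal.mul_rpow_of_nonneg _ _ (by positivity)]
  gcongr
  exact_mod_cast nnnorm_mul_le (a ^ n) (b ^ n)

theorem isUnit_add_of_spectralRadius_eq_zero (ha : IsUnit a) (h : Commute a q)
    (hq : spectralRadius ℂ q = 0) : IsUnit (a + q) := by
  obtain ⟨u, rfl⟩ := ha
  have hrad : spectralRadius ℂ (↑u⁻¹ * q) = 0 := by
    simpa [hq] using spectralRadius_mul_le h.units_inv_left
  have hunit : IsUnit (algebraMap ℂ A (-1) - ↑u⁻¹ * q) :=
    spectrum.mem_resolventSet_of_spectralRadius_lt (by simp [hrad])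
  have hfactor : (u : A) + q = -u * (algebraMap ℂ A (-1) - ↑u⁻¹ * q) := by
    simp [mul_sub]
  rw [hfactor]
  exact u.isUnit.neg.mul hunit

theorem isUnit_add_iff_of_spectralRadius_eq_zero (h : Commute a q)
    (hq : spectralRadius ℂ q = 0) : IsUnit (a + q) ↔ IsUnit a := by
  refine ⟨fun ha => ?_, fun ha => isUnit_add_of_spectralRadius_eq_zero ha h hq⟩
  have hneg : spectralRadius ℂ (-q) = 0 := by
    simpa [hq] using spectralRadius_mul_le (Commute.neg_one_left q)
  simpa using isUnit_add_of_spectralRadius_eq_zero ha (h.add_left (Commute.refl q)).neg_right hneg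

theorem spectrum_add_of_spectralRadius_eq_zero (h : Commute a q) (hq : spectralRadius ℂ q = 0) :
    spectrum ℂ (a + q) = spectrum ℂ a := by
  ext z
  have hcomm : Commute (algebraMap ℂ A z - (a + q)) q :=
    (Algebra.commute_algebraMap_left z q).sub_left (h.add_left (Commute.refl q))
  have hsum : algebraMap ℂ A z - (a + q) + q = algebraMap ℂ A z - a := by abel
  rw [spectrum.mem_iff, spectrum.mem_iff, ← hsum, isUnit_add_iff_of_spectralRadius_eq_zero hcomm hq]

theorem spectrum_subset_closedBall_of_norm_pow_le {C r : ℝ} (hr : 0 < r)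
    (hC : ∀ k : ℕ, ‖a ^ k‖ ≤ C * r ^ k) : spectrum ℂ a ⊆ closedBall 0 r := by
  intro z hz
  rw [mem_closedBall_zero_iff]
  by_contra! hlt
  obtain ⟨k, hk⟩ := pow_unbounded_of_one_lt (C * ‖(1 : A)‖) ((one_lt_div hr).2 hlt)
  refine hk.not_ge ?_
  rw [div_pow, div_le_iff₀ (by positivity)]
  calc ‖z‖ ^ k = ‖z ^ k‖ := (norm_pow z k).symm
    _ ≤ ‖a ^ k‖ * ‖(1 : A)‖ := spectrum.norm_le_norm_mul_of_mem (spectrum.pow_mem_pow a k hz)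
    _ ≤ C * r ^ k * ‖(1 : A)‖ := by gcongr; exact hC k
    _ = C * ‖(1 : A)‖ * r ^ k := by ring

theorem derivedSet_spectrum_subset (a : A) : derivedSet (spectrum ℂ a) ⊆ spectrum ℂ a :=
  (isClosed_iff_derivedSet_subset _).1 (spectrum.isClosed a)

end SpectralRadius

section CircleIntegral

theorem map_circleIntegral {E F : Type*} [NormedAddCommGroup E] [NormedSpace ℂ E] [CompleteSpace E]
    [NormedAddCommGroup F] [NormedSpace ℂ F] [CompleteSpace F] (L : E →L[ℂ] F) {f : ℂ → E} {c : ℂ}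
    {r : ℝ} (hf : CircleIntegrable f c r) :
    L (∮ z in C(c, r), f z) = ∮ z in C(c, r), L (f z) := by
  simpa only [circleIntegral, map_smul] using (L.intervalIntegral_comp_comm hf.out).symm

theorem two_pi_I_inv_mul_circleIntegral_zpow {r : ℝ} (hr : r ≠ 0) (k : ℤ) :
    (2 * Real.pi * Complex.I)⁻¹ * ∮ z in C(0, r), z ^ k = if k = -1 then 1 else 0 := by
  split_ifs with hk
  · have hint := circleIntegral.integral_sub_center_inv 0 hr
    simp only [sub_zero] at hint
    simp only [hk, zpow_neg_one, hint, inv_mul_cancel₀ Complex.two_pi_I_ne_zero]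
  · have hint := circleIntegral.integral_sub_zpow_of_ne hk 0 0 r
    simp only [sub_zero] at hint
    rw [hint, mul_zero]

end CircleIntegral

section RieszProjection

variable {A : Type*} [NormedRing A] [NormedAlgebra ℂ A]

/-- The moment `(2πi)⁻¹ ∮ zᵏ (z - a)⁻¹ dz` of the resolvent of `a` over the circle `|z| = r`; up to
the indexing, these are the Laurent coefficients of the resolvent on an annulus around the circle.
It is meaningful only when the circle lies in the resolvent set. -/
noncomputable def resolventMoment (a : A) (r : ℝ) (k : ℤ) : A :=
  (2 * Real.pi * Complex.I : ℂ)⁻¹ • ∮ z in C(0, r), z ^ k • resolvent a z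

/-- The Riesz projection of `a` onto the part of its spectrum inside the circle `|z| = r`. -/
noncomputable abbrev rieszProjection (a : A) (r : ℝ) : A :=
  resolventMoment a r 0

variable [CompleteSpace A] {a c : A} {r s : ℝ}

theorem differentiableAt_zpow_smul_resolvent {z : ℂ} (hz : z ∈ resolventSet ℂ a) (hz₀ : z ≠ 0)
    (k : ℤ) : DifferentiableAt ℂ (fun w => w ^ k • resolvent a w) z :=
  (differentiableAt_zpow.2 (Or.inl hz₀)).smul
    (spectrum.hasDerivAt_resolvent_const_left hz).differentiableAt

theorem continuousOn_zpow_smul_resolvent (hr : 0 < r) (h : sphere 0 r ⊆ resolventSet ℂ a) (k : ℤ) :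
    ContinuousOn (fun z : ℂ => z ^ k • resolvent a z) (sphere 0 r) := fun _ hz =>
  (differentiableAt_zpow_smul_resolvent (h hz) (ne_of_mem_sphere hz hr.ne')
    k).continuousAt.continuousWithinAt

theorem circleIntegrable_zpow_smul_resolvent (hr : 0 < r) (h : sphere 0 r ⊆ resolventSet ℂ a)
    (k : ℤ) : CircleIntegrable (fun z => z ^ k • resolvent a z) 0 r :=
  (continuousOn_zpow_smul_resolvent hr h k).circleIntegrable hr.le

theorem commute_resolventMoment (hr : 0 < r) (h : sphere 0 r ⊆ resolventSet ℂ a)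
    (hc : Commute c a) (k : ℤ) : Commute c (resolventMoment a r k) := by
  have hint := circleIntegrable_zpow_smul_resolvent hr h k
  refine Commute.smul_right ?_ _
  calc c * ∮ z in C(0, r), z ^ k • resolvent a z
      = ∮ z in C(0, r), c * z ^ k • resolvent a z :=
        map_circleIntegral (ContinuousLinearMap.mul ℂ A c) hint
    _ = ∮ z in C(0, r), z ^ k • resolvent a z * c := by
        simp only [mul_smul_comm, smul_mul_assoc, (commute_resolvent hc _).eq]
    _ = (∮ z in C(0, r), z ^ k • resolvent a z) * c :=
        (map_circleIntegral ((ContinuousLinearMap.mul ℂ A).flip c) hint).symm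

theorem mul_resolventMoment (hr : 0 < r) (h : sphere 0 r ⊆ resolventSet ℂ a) (k : ℤ) :
    a * resolventMoment a r k = resolventMoment a r (k + 1) - if k = -1 then 1 else 0 := by
  have hzpow : CircleIntegrable (fun z : ℂ => z ^ k • (1 : A)) 0 r := by
    refine ContinuousOn.circleIntegrable hr.le fun z hz => ?_
    exact ((continuousAt_zpow₀ z k (Or.inl (ne_of_mem_sphere hz hr.ne'))).smul
      continuousAt_const).continuousWithinAt
  have hintegral : a * ∮ z in C(0, r), z ^ k • resolvent a z =
      (∮ z in C(0, r), z ^ (k + 1) • resolvent a z) - ∮ z in C(0, r), z ^ k • (1 : A) := by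
    rw [← circleIntegral.integral_sub (circleIntegrable_zpow_smul_resolvent hr h _) hzpow]
    refine (map_circleIntegral (ContinuousLinearMap.mul ℂ A a)
      (circleIntegrable_zpow_smul_resolvent hr h k)).trans ?_
    refine circleIntegral.integral_congr hr.le fun z hz => ?_
    simp only [ContinuousLinearMap.mul_apply', mul_smul_comm, mul_resolvent (h hz), smul_sub,
      smul_smul, zpow_add_one₀ (ne_of_mem_sphere hz hr.ne')]
  rw [resolventMoment, mul_smul_comm, hintegral, smul_sub, circleIntegral.integral_smul_const,
    smul_smul, two_pi_I_inv_mul_circleIntegral_zpow hr.ne', ite_smul, one_smul, zero_smul,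
    resolventMoment]

theorem pow_mul_rieszProjection (hr : 0 < r) (h : sphere 0 r ⊆ resolventSet ℂ a) (k : ℕ) :
    a ^ k * rieszProjection a r = resolventMoment a r k := by
  induction k with
  | zero => simp
  | succ k ih =>
    rw [pow_succ', mul_assoc, ih, mul_resolventMoment hr h, if_neg (by omega), sub_zero,
      Nat.cast_succ]

theorem pow_mul_resolventMoment_neg (hr : 0 < r) (h : sphere 0 r ⊆ resolventSet ℂ a) (k : ℕ) :
    a ^ (k + 1) * resolventMoment a r (-(k + 1 : ℕ)) = rieszProjection a r - 1 := by
  induction k with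
  | zero => simp [mul_resolventMoment hr h]
  | succ k ih =>
    rw [pow_succ, mul_assoc, mul_resolventMoment hr h, if_neg (by omega), sub_zero, ← ih]
    congr 2

theorem exists_norm_resolventMoment_le (hr : 0 < r) (h : sphere 0 r ⊆ resolventSet ℂ a) :
    ∃ C : ℝ, ∀ k : ℤ, ‖resolventMoment a r k‖ ≤ C * r ^ k := by
  obtain ⟨C, hC⟩ := (isCompact_sphere (0 : ℂ) r).exists_bound_of_continuousOn
    (continuousOn_zpow_smul_resolvent hr h 0)
  refine ⟨r * C, fun k => ?_⟩
  rw [mul_assoc]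
  refine circleIntegral.norm_two_pi_i_inv_smul_integral_le_of_norm_le_const hr.le fun z hz => ?_
  have hCz : ‖resolvent a z‖ ≤ C := by simpa using hC z hz
  rw [norm_smul, norm_zpow, mem_sphere_zero_iff_norm.1 hz, mul_comm]
  gcongr

theorem resolventMoment_eq_of_annulus_subset (hr : 0 < r) (hrs : r ≤ s)
    (h : closedBall 0 s \ ball 0 r ⊆ resolventSet ℂ a) (k : ℤ) :
    resolventMoment a s k = resolventMoment a r k := by
  have hdiff : ∀ z ∈ closedBall (0 : ℂ) s \ ball 0 r,
      DifferentiableAt ℂ (fun w => w ^ k • resolvent a w) z := fun z hz =>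
    differentiableAt_zpow_smul_resolvent (h hz) (by rintro rfl; exact hz.2 (mem_ball_self hr)) k
  rw [resolventMoment, resolventMoment,
    Complex.circleIntegral_eq_of_differentiable_on_annulus_off_countable hr hrs countable_empty
      (fun z hz => (hdiff z hz).continuousAt.continuousWithinAt)]
  rintro z ⟨⟨hzs, hzr⟩, -⟩
  exact hdiff z ⟨ball_subset_closedBall hzs, fun hz => hzr (ball_subset_closedBall hz)⟩

theorem exists_annulus_subset_resolventSet (h : sphere 0 r ⊆ resolventSet ℂ a) :
    ∃ s > r, closedBall 0 s \ ball 0 r ⊆ resolventSet ℂ a := by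
  have hclosed : IsClosed (norm '' spectrum ℂ a) :=
    ((spectrum.isCompact a).image continuous_norm).isClosed
  have hr : r ∉ norm '' spectrum ℂ a := by
    rintro ⟨z, hz, hzr⟩
    exact hz (h (mem_sphere_zero_iff_norm.2 hzr))
  obtain ⟨s, hrs, hs⟩ := mem_nhdsGE_iff_exists_Icc_subset.1
    (mem_nhdsWithin_of_mem_nhds (hclosed.isOpen_compl.mem_nhds hr))
  refine ⟨s, hrs, fun z ⟨hzs, hzr⟩ => ?_⟩
  rw [mem_closedBall_zero_iff] at hzs
  rw [mem_ball_zero_iff, not_lt] at hzr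
  by_contra hz
  exact hs ⟨hzr, hzs⟩ ⟨z, hz, rfl⟩

theorem isIdempotentElem_rieszProjection (hr : 0 < r) (h : sphere 0 r ⊆ resolventSet ℂ a) :
    IsIdempotentElem (rieszProjection a r) := by
  obtain ⟨s, hrs, hann⟩ := exists_annulus_subset_resolventSet h
  have hs : 0 < s := hr.trans hrs
  have h' : sphere 0 s ⊆ resolventSet ℂ a := fun z hz =>
    hann ⟨sphere_subset_closedBall hz, fun hzr => (hrs.trans_eq hz.symm).not_gt hzr⟩
  obtain ⟨C, hC⟩ := exists_norm_resolventMoment_le hr h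
  obtain ⟨D, hD⟩ := exists_norm_resolventMoment_le hs h'
  set p := rieszProjection a r with hp
  -- `aᵏ p = O(rᵏ)` and `p - 1 = aᵏ O(s⁻ᵏ)`, so `p (p - 1) = O((r / s)ᵏ)` for every `k`.
  have hfactor (k : ℕ) : p * (p - 1) =
      resolventMoment a r (k + 1 : ℕ) * resolventMoment a s (-(k + 1 : ℕ)) := by
    have hcomm : Commute p (a ^ (k + 1)) :=
      ((commute_resolventMoment hr h (Commute.refl a) 0).pow_left _).symm
    rw [resolventMoment_eq_of_annulus_subset hr hrs.le hann, ← pow_mul_rieszProjection hr h, ← hp,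
      ← hcomm.eq, mul_assoc, pow_mul_resolventMoment_neg hr h]
  have hbound (k : ℕ) : ‖p * (p - 1)‖ ≤ C * D * (r / s) ^ (k + 1) := by
    rw [hfactor k]
    calc _ ≤ (C * r ^ ((k + 1 : ℕ) : ℤ)) * (D * s ^ (-(k + 1 : ℕ) : ℤ)) :=
          norm_mul_le_of_le (hC _) (hD _)
      _ = C * D * (r / s) ^ (k + 1) := by
          rw [zpow_neg, zpow_natCast, zpow_natCast, div_pow]
          ring
  have htendsto : Tendsto (fun k : ℕ => C * D * (r / s) ^ (k + 1)) atTop (𝓝 0) := by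
    have hpow := tendsto_pow_atTop_nhds_zero_of_lt_one (by positivity) ((div_lt_one hs).2 hrs)
    simpa using ((tendsto_add_atTop_iff_nat 1).2 hpow).const_mul (C * D)
  have hzero : p * (p - 1) = 0 := norm_le_zero_iff.1 (ge_of_tendsto' htendsto hbound)
  rwa [mul_sub, mul_one, sub_eq_zero] at hzero

end RieszProjection

section Restriction

variable {E : Type*} [NormedAddCommGroup E] [NormedSpace ℂ E] {S T P : E →L[ℂ] E}
  {M N : Submodule ℂ E}

theorem coe_restrictCLM_apply (hM : ∀ x ∈ M, T x ∈ M) (x : M) :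
    (restrictCLM T M x : E) = T x := by
  rw [restrictCLM, dif_pos hM]
  rfl

theorem coe_restrictCLM_pow_apply (hM : ∀ x ∈ M, T x ∈ M) (k : ℕ) (x : M) :
    ((restrictCLM T M ^ k) x : E) = (T ^ k) x := by
  induction k with
  | zero => rfl
  | succ k ih =>
    simp only [pow_succ', mul_apply_eq_comp, coe_restrictCLM_apply hM, ih]

theorem algebraMap_sub_mapsTo (hM : ∀ x ∈ M, T x ∈ M) (z : ℂ) :
    ∀ x ∈ M, (algebraMap ℂ (E →L[ℂ] E) z - T) x ∈ M := fun x hx =>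
  M.sub_mem (M.smul_mem z hx) (hM x hx)

theorem restrictCLM_algebraMap_sub (hM : ∀ x ∈ M, T x ∈ M) (z : ℂ) :
    restrictCLM (algebraMap ℂ (E →L[ℂ] E) z - T) M =
      algebraMap ℂ (M →L[ℂ] M) z - restrictCLM T M := by
  ext x
  rw [coe_restrictCLM_apply (algebraMap_sub_mapsTo hM z)]
  simp [Algebra.algebraMap_eq_smul_one, coe_restrictCLM_apply hM]

theorem isUnit_restrictCLM (hT : ∀ x ∈ M, T x ∈ M) (hS : ∀ x ∈ M, S x ∈ M)
    (hTS : ∀ x ∈ M, T (S x) = x) (hST : ∀ x ∈ M, S (T x) = x) : IsUnit (restrictCLM T M) := by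
  refine isUnit_iff_exists.2 ⟨restrictCLM S M, ?_, ?_⟩ <;> ext x
  · simpa [coe_restrictCLM_apply hT, coe_restrictCLM_apply hS] using hTS x x.2
  · simpa [coe_restrictCLM_apply hT, coe_restrictCLM_apply hS] using hST x x.2

theorem bijective_of_bijective_restrictCLM (hM : ∀ x ∈ M, T x ∈ M) (hN : ∀ x ∈ N, T x ∈ N)
    (hMN : IsCompl M N) (hTM : Bijective (restrictCLM T M)) (hTN : Bijective (restrictCLM T N)) :
    Bijective T := by
  let e := Submodule.prodEquivOfIsCompl M N hMN
  have hconj : T ∘ e = e ∘ Prod.map (restrictCLM T M) (restrictCLM T N) := by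
    ext x
    simp [e, coe_restrictCLM_apply hM, coe_restrictCLM_apply hN]
  rw [← Bijective.of_comp_iff _ e.bijective, hconj]
  exact e.bijective.comp (hTM.prodMap hTN)

theorem spectrum_subset_union_of_red [CompleteSpace E] (h : Red T M N) :
    spectrum ℂ T ⊆ spectrum ℂ (restrictCLM T M) ∪ spectrum ℂ (restrictCLM T N) := by
  obtain ⟨hM_closed, hN_closed, hM, hN, hMN⟩ := h
  have : CompleteSpace M := hM_closed.completeSpace_coe
  have : CompleteSpace N := hN_closed.completeSpace_coe
  intro z hz
  contrapose! hz
  simp only [mem_union, not_or, spectrum.notMem_iff, ContinuousLinearMap.isUnit_iff_bijective,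
    ← restrictCLM_algebraMap_sub hM, ← restrictCLM_algebraMap_sub hN] at hz ⊢
  exact bijective_of_bijective_restrictCLM (algebraMap_sub_mapsTo hM z)
    (algebraMap_sub_mapsTo hN z) hMN hz.1 hz.2

theorem map_mem_ker_of_commute (hPT : Commute P T) : ∀ x ∈ P.ker, T x ∈ P.ker := by
  intro x hx
  have hPTx : P (T x) = T (P x) := DFunLike.congr_fun hPT.eq x
  rw [LinearMap.mem_ker, ContinuousLinearMap.coe_coe] at hx ⊢
  rw [hPTx, hx, map_zero]

theorem map_mem_range_of_commute (hPT : Commute P T) : ∀ x ∈ P.range, T x ∈ P.range := by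
  rintro _ ⟨y, rfl⟩
  exact ⟨T y, DFunLike.congr_fun hPT.eq y⟩

theorem red_ker_range (hP : IsIdempotentElem P) (hPT : Commute P T) : Red T P.ker P.range :=
  ⟨P.isClosed_ker, ContinuousLinearMap.IsIdempotentElem.isClosed_range hP,
    map_mem_ker_of_commute hPT, map_mem_range_of_commute hPT,
    (LinearMap.IsIdempotentElem.isCompl
      (ContinuousLinearMap.isIdempotentElem_toLinearMap_iff.2 hP)).symm⟩

theorem spectrum_restrictCLM_range_subset (hPT : Commute P T) :
    spectrum ℂ (restrictCLM T P.range) ⊆ spectrum ℂ T := by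
  have hT := map_mem_range_of_commute hPT
  refine compl_subset_compl.1 fun z hz => ?_
  have hz : z ∈ resolventSet ℂ T := by simpa [spectrum] using hz
  rw [mem_compl_iff, spectrum.notMem_iff, ← restrictCLM_algebraMap_sub hT]
  refine isUnit_restrictCLM (algebraMap_sub_mapsTo hT z)
    (map_mem_range_of_commute (commute_resolvent hPT z)) (fun x _ => ?_) (fun x _ => ?_)
  · exact DFunLike.congr_fun (Ring.mul_inverse_cancel _ hz) x
  · exact DFunLike.congr_fun (Ring.inverse_mul_cancel _ hz) x

theorem norm_restrictCLM_range_pow_le (hP : IsIdempotentElem P) (hPT : Commute P T) (k : ℕ) :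
    ‖restrictCLM T P.range ^ k‖ ≤ ‖T ^ k * P‖ := by
  refine ContinuousLinearMap.opNorm_le_bound _ (norm_nonneg _) fun x => ?_
  have hPx : P x = x := by
    obtain ⟨y, hy⟩ := x.2
    rw [← hy]
    exact DFunLike.congr_fun hP.eq y
  calc ‖(restrictCLM T P.range ^ k) x‖ = ‖(T ^ k) x‖ := by
        rw [← coe_restrictCLM_pow_apply (map_mem_range_of_commute hPT), Submodule.coe_norm]
    _ = ‖(T ^ k * P) x‖ := by rw [mul_apply_eq_comp, hPx]
    _ ≤ ‖T ^ k * P‖ * ‖x‖ := (T ^ k * P).le_opNorm x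

theorem spectrum_restrictCLM_range_subset_closedBall [CompleteSpace E] (hP : IsIdempotentElem P)
    (hPT : Commute P T) {C r : ℝ} (hr : 0 < r) (hC : ∀ k : ℕ, ‖T ^ k * P‖ ≤ C * r ^ k) :
    spectrum ℂ (restrictCLM T P.range) ⊆ closedBall 0 r := by
  have : CompleteSpace P.range :=
    (ContinuousLinearMap.IsIdempotentElem.isClosed_range hP).completeSpace_coe
  have hpow (k : ℕ) : ‖restrictCLM T P.range ^ k‖ ≤ C * r ^ k :=
    (norm_restrictCLM_range_pow_le hP hPT k).trans (hC k)
  exact spectrum_subset_closedBall_of_norm_pow_le (a := restrictCLM T P.range) hr hpow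

end Restriction

section GzInvertible

theorem accSet_eq_derivedSet (S : Set ℂ) : accSet S = derivedSet S := rfl

variable {E : Type*} [NormedAddCommGroup E] [NormedSpace ℂ E] [CompleteSpace E] {T : E →L[ℂ] E}

theorem zero_notMem_accSet_accSet_of_gzInvertible (hT : GzInvertible T) :
    0 ∉ accSet (accSet (spectrum ℂ T)) := by
  obtain ⟨M, N, hred, hM, hN⟩ := hT
  rw [Zeroloid, accSet_eq_derivedSet] at hN
  simp only [accSet_eq_derivedSet]
  have : CompleteSpace M := hred.1.completeSpace_coe
  have hM_zero : 0 ∉ spectrum ℂ (restrictCLM T M) :=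
    (spectrum.zero_notMem_iff ℂ).2 (ContinuousLinearMap.isUnit_iff_bijective.2 hM)
  have hM_derived : derivedSet (spectrum ℂ (restrictCLM T M)) ⊆ spectrum ℂ (restrictCLM T M) :=
    derivedSet_spectrum_subset (restrictCLM T M)
  have hacc : derivedSet (spectrum ℂ T) ⊆ spectrum ℂ (restrictCLM T M) ∪ {0} := calc
    _ ⊆ derivedSet (spectrum ℂ (restrictCLM T M) ∪ spectrum ℂ (restrictCLM T N)) :=
      derivedSet_mono _ _ (spectrum_subset_union_of_red hred)
    _ = derivedSet (spectrum ℂ (restrictCLM T M)) ∪ derivedSet (spectrum ℂ (restrictCLM T N)) :=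
      derivedSet_union _ _
    _ ⊆ _ := union_subset_union hM_derived hN
  intro hzero
  have hmem : 0 ∈ derivedSet (spectrum ℂ (restrictCLM T M) ∪ {0}) :=
    derivedSet_mono _ _ hacc hzero
  rw [derivedSet_union] at hmem
  rcases hmem with hmem | hmem
  · exact hM_zero (hM_derived hmem)
  · exact Set.Infinite.of_accPt hmem (finite_singleton 0)

theorem bijective_restrictCLM_ker_rieszProjection {r : ℝ} (hr : 0 < r)
    (h : sphere 0 r ⊆ resolventSet ℂ T) :
    Bijective (restrictCLM T (rieszProjection T r).ker) := by
  set P := rieszProjection T r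
  set B := resolventMoment T r (-1)
  have hTB : T * B = P - 1 := by simpa using pow_mul_resolventMoment_neg hr h 0
  have hBT : Commute T B := commute_resolventMoment hr h (Commute.refl T) (-1)
  have hPT : Commute T P := commute_resolventMoment hr h (Commute.refl T) 0
  have hPB : Commute P B := (commute_resolventMoment hr h hBT.symm 0).symm
  have : CompleteSpace P.ker := P.isClosed_ker.completeSpace_coe
  rw [← ContinuousLinearMap.isUnit_iff_bijective]
  refine isUnit_restrictCLM (S := -B) (map_mem_ker_of_commute hPT.symm)
    (map_mem_ker_of_commute hPB.neg_right) (fun x hx => ?_) fun x hx => ?_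
  · have hTBx : T (B x) = P x - x := DFunLike.congr_fun hTB x
    have hPx : P x = 0 := hx
    simp [hTBx, hPx]
  · have hBTx : B (T x) = P x - x := DFunLike.congr_fun (hBT.eq.symm.trans hTB) x
    have hPx : P x = 0 := hx
    simp [hBTx, hPx]

theorem spectrum_restrictCLM_range_rieszProjection_subset {r : ℝ} (hr : 0 < r)
    (h : sphere 0 r ⊆ resolventSet ℂ T) :
    spectrum ℂ (restrictCLM T (rieszProjection T r).range) ⊆ closedBall 0 r := by
  obtain ⟨C, hC⟩ := exists_norm_resolventMoment_le hr h
  have hpow (k : ℕ) : ‖T ^ k * rieszProjection T r‖ ≤ C * r ^ k := by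
    rw [pow_mul_rieszProjection hr h, ← zpow_natCast r]
    exact hC k
  exact spectrum_restrictCLM_range_subset_closedBall (isIdempotentElem_rieszProjection hr h)
    (commute_resolventMoment hr h (Commute.refl T) 0).symm hr hpow

theorem gzInvertible_of_zero_notMem_accSet_accSet (hT : 0 ∉ accSet (accSet (spectrum ℂ T))) :
    GzInvertible T := by
  simp only [accSet_eq_derivedSet] at hT
  obtain ⟨r, hr, hdisj, hacc⟩ := exists_sphere_disjoint hT
  have hsphere : sphere 0 r ⊆ resolventSet ℂ T :=
    fun z hz => not_not.1 (Set.disjoint_left.1 hdisj hz)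
  set P := rieszProjection T r
  have hP : IsIdempotentElem P := isIdempotentElem_rieszProjection hr hsphere
  have hPT : Commute P T := (commute_resolventMoment hr hsphere (Commute.refl T) 0).symm
  have hred : Red T P.ker P.range := red_ker_range hP hPT
  refine ⟨P.ker, P.range, hred, bijective_restrictCLM_ker_rieszProjection hr hsphere, ?_⟩
  have : CompleteSpace P.range := hred.2.1.completeSpace_coe
  rw [Zeroloid, accSet_eq_derivedSet]
  refine (subset_inter ?_ ?_).trans hacc
  · exact (derivedSet_spectrum_subset (restrictCLM T P.range)).trans
      (spectrum_restrictCLM_range_rieszProjection_subset hr hsphere)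
  · exact derivedSet_mono _ _ (spectrum_restrictCLM_range_subset hPT)

theorem gzInvertible_iff_zero_notMem_accSet_accSet :
    GzInvertible T ↔ 0 ∉ accSet (accSet (spectrum ℂ T)) :=
  ⟨zero_notMem_accSet_accSet_of_gzInvertible, gzInvertible_of_zero_notMem_accSet_accSet⟩

end GzInvertible

/-- The `g_z`-invertible spectrum is stable under commuting quasi-nilpotent perturbations. -/
theorem gz_spectrum_quasinilpotent_perturbation (T Q : X →L[ℂ] X)
    (hQ : QuasiNilpotent Q) (hcomm : T * Q = Q * T) :
    ∀ z : ℂ, GzInvertible (T - z • 1) ↔ GzInvertible (T + Q - z • 1) := by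
  intro z
  have hcomm_sub : Commute (T - z • 1) Q :=
    Commute.sub_left hcomm ((Commute.one_left Q).smul_left z)
  have hspectrum : spectrum ℂ (T + Q - z • 1) = spectrum ℂ (T - z • 1) := by
    rw [add_sub_right_comm]
    exact spectrum_add_of_spectralRadius_eq_zero hcomm_sub (spectralRadius_eq_zero_iff.2 hQ)
  simp only [gzInvertible_iff_zero_notMem_accSet_accSet, hspectrum]
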